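/- For every s ∈ (0,1), the tetrahedral PET f̃_s is a polytope exchange transformation of the torus: there is a finite union N of line segments in Δ̃ such that f̃_s is defined and injective on Δ̃ ∖ N, the image f̃_s(Δ̃ ∖ N) has full Haar measure in Δ̃, and f̃_s preserves Haar measure (the pushforward under f̃_s of the Haar measure restricted to Δ̃ ∖ N agrees with the Haar measure of Δ̃ up to a null set). -/

import Mathlib

open MeasureTheory
open scoped Classical

noncomputable section

/-- The lattice Λ ⊂ ℝ² generated by (2,0) and (1,−√3). -/
def TetLat : AddSubgroup (ℝ × ℝ) :=
  AddSubgroup.closure {((2 : ℝ), (0 : ℝ)), ((1 : ℝ), -Real.sqrt 3)}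

/-- The torus Δ̃ = ℝ²/Λ. -/
abbrev Torus := (ℝ × ℝ) ⧸ TetLat

/-- The quotient map ℝ² → Δ̃. -/
def tmk : ℝ × ℝ → Torus := QuotientAddGroup.mk

/-- The vertex sets of the four triangles A₀, A₁, A₂, A₃. -/
def triVerts : Fin 4 → Set (ℝ × ℝ)
  | 0 => {((-1 : ℝ), (0 : ℝ)), ((-1/2 : ℝ), Real.sqrt 3 / 2), ((0 : ℝ), (0 : ℝ))}
  | 1 => {((-1 : ℝ), (0 : ℝ)), ((-1/2 : ℝ), Real.sqrt 3 / 2), ((-3/2 : ℝ), Real.sqrt 3 / 2)}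
  | 2 => {((-1/2 : ℝ), Real.sqrt 3 / 2), ((0 : ℝ), (0 : ℝ)), ((1/2 : ℝ), Real.sqrt 3 / 2)}
  | 3 => {((-1 : ℝ), (0 : ℝ)), ((0 : ℝ), (0 : ℝ)), ((-1/2 : ℝ), -Real.sqrt 3 / 2)}

/-- The triangle A_α, as a subset of the torus Δ̃. -/
def TriA (α : Fin 4) : Set Torus := tmk '' (convexHull ℝ (triVerts α))

/-- The involution ι of Δ̃, induced by (x,y) ↦ (−x,−y). -/
def iot : Torus → Torus := fun p => -p

/-- The unit vectors ω₀, ω₁, ω₂ in the directions of the cube roots of unity. -/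
def om : Fin 3 → ℝ × ℝ
  | 0 => ((1 : ℝ), (0 : ℝ))
  | 1 => ((-1/2 : ℝ), Real.sqrt 3 / 2)
  | 2 => ((-1/2 : ℝ), -Real.sqrt 3 / 2)

/-- The index 3 − i. -/
def opp : Fin 3 → Fin 4
  | 0 => 3
  | 1 => 2
  | 2 => 1

/-- The open region where f̃ᵢ translates by +s·ωᵢ. -/
def PosReg (i : Fin 3) : Set Torus :=
  interior ((⋃ α ∈ {a : Fin 4 | a ≠ opp i}, TriA α) ∪ iot '' TriA (opp i))

/-- The open region where f̃ᵢ translates by −s·ωᵢ. -/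
def NegReg (i : Fin 3) : Set Torus :=
  interior (TriA (opp i) ∪ ⋃ α ∈ {a : Fin 4 | a ≠ opp i}, iot '' TriA α)

/-- The map f̃ᵢ (extended arbitrarily, by the −s·ωᵢ formula, off its domain of definition). -/
def fI (s : ℝ) (i : Fin 3) (p : Torus) : Torus :=
  if p ∈ PosReg i then p + tmk (s • om i) else p - tmk (s • om i)

/-- The set where f̃ᵢ is defined. -/
def fIDef (i : Fin 3) (p : Torus) : Prop := p ∈ PosReg i ∨ p ∈ NegReg i

/-- The tetrahedral PET f̃ₛ = f̃₂ ∘ f̃₁ ∘ f̃₀. -/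
def fS (s : ℝ) : Torus → Torus := fI s 2 ∘ fI s 1 ∘ fI s 0

/-- The set where f̃ₛ is defined. -/
def fSDef (s : ℝ) (p : Torus) : Prop :=
  fIDef 0 p ∧ fIDef 1 (fI s 0 p) ∧ fIDef 2 (fI s 1 (fI s 0 p))


instance : MeasurableSpace Torus := borel Torus

/-- A fundamental parallelogram for the lattice Λ. -/
def FundDom : Set (ℝ × ℝ) :=
  (fun q : ℝ × ℝ => q.1 • ((2 : ℝ), (0 : ℝ)) + q.2 • ((1 : ℝ), -Real.sqrt 3)) ''
    (Set.Ico (0 : ℝ) 1 ×ˢ Set.Ico (0 : ℝ) 1)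

/-- Haar (Lebesgue) measure on the torus Δ̃, as the pushforward of Lebesgue measure
on a fundamental parallelogram. -/
def haarT : Measure Torus := Measure.map tmk (volume.restrict FundDom)

/-!
Each `fI s i` is a shear. Modulo the lattice, the linear coordinate `height i` that is constant
along `om i` takes values in a circle of length `2`, and the four triangles defining `PosReg i` tile
the strip over one half of that circle. There `fI s i` moves points by `s • om i`, and over the
other half by `-s • om i`. As motion along `om i` does not change `height i`, the map `fI s i`
preserves both halves; hence it is inverted by `fI (-s) i` and preserves Haar measure. It is
undefined only on the two closed lines `height i ∈ {0, 1}`.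

Since `height i (om j) ∈ {-1, 0, 1}`, each `fI s j` changes `height i` by an integer multiple of
`s`; hence the points where `fS s` is undefined lie on the finitely many lines
`height i = j - k * s` with `j ∈ {0, 1}` and `|k| ≤ 2`, each of which is the image of a segment.
-/

section Measure

variable {α β : Type*} [MeasurableSpace α] [MeasurableSpace β] {μ : Measure α} {ν : Measure β}

lemma measurePreserving_piecewise {f g : α → β} {S : Set α} {T : Set β}
    (hf : MeasurePreserving f μ ν) (hg : MeasurePreserving g μ ν) (hT : MeasurableSet T)
    (hfS : f ⁻¹' T = S) (hgS : g ⁻¹' T = S) : MeasurePreserving (S.piecewise f g) μ ν := by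
  have hS : MeasurableSet S := hfS ▸ hf.measurable hT
  refine ⟨hf.measurable.piecewise hS hg.measurable, Measure.ext fun E hE => ?_⟩
  have h_inter : S.piecewise f g ⁻¹' E ∩ S = f ⁻¹' (E ∩ T) := by
    rw [Set.piecewise_preimage, Set.ite_inter_self, Set.preimage_inter, hfS]
  have h_diff : S.piecewise f g ⁻¹' E \ S = g ⁻¹' (E \ T) := by
    rw [Set.piecewise_preimage, Set.ite_sdiff_self, Set.preimage_sdiff, hgS]
  rw [Measure.map_apply (hf.measurable.piecewise hS hg.measurable) hE,
    ← measure_inter_add_sdiff _ hS, h_inter, h_diff,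
    hf.measure_preimage (hE.inter hT).nullMeasurableSet,
    hg.measure_preimage (hE.diff hT).nullMeasurableSet, measure_inter_add_sdiff E hT]

lemma measure_compl_image_compl_eq_zero {e : α ≃ᵐ β} (he : MeasurePreserving e μ ν) {N : Set α}
    (hN : μ N = 0) : ν (e '' Nᶜ)ᶜ = 0 := by
  rw [Set.image_compl_eq e.bijective, compl_compl, e.image_eq_preimage_symm,
    (MeasurePreserving.symm e he).measure_preimage_equiv, hN]

lemma map_restrict_compl_of_null {f : α → β} (hf : MeasurePreserving f μ ν) {N : Set α}
    (hN : μ N = 0) : (μ.restrict Nᶜ).map f = ν := by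
  rw [Measure.restrict_eq_self_of_ae_mem (s := Nᶜ) (compl_mem_ae_iff.2 hN), hf.map_eq]

open scoped Pointwise in
lemma isAddLeftInvariant_map_quotientMk {G : Type*} [AddCommGroup G] [MeasurableSpace G]
    [MeasurableAdd G] {Γ : AddSubgroup G} [Countable Γ] {_ : MeasurableSpace (G ⧸ Γ)}
    [MeasurableAdd (G ⧸ Γ)] {ν : Measure G} [ν.IsAddLeftInvariant] {F : Set G}
    (hF : IsAddFundamentalDomain Γ F ν) (h_mk : Measurable (QuotientAddGroup.mk : G → G ⧸ Γ)) :
    ((ν.restrict F).map (QuotientAddGroup.mk : G → G ⧸ Γ)).IsAddLeftInvariant := by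
  refine ⟨QuotientAddGroup.mk_surjective.forall.2 fun v => Measure.ext fun E hE => ?_⟩
  have hE' := measurable_const_add (v : G ⧸ Γ) hE
  have h_periodic (γ : Γ) :
      (γ +ᵥ ·) ⁻¹' (QuotientAddGroup.mk (s := Γ) ⁻¹' E) = QuotientAddGroup.mk (s := Γ) ⁻¹' E := by
    ext x
    simp [AddSubgroup.vadd_def, (QuotientAddGroup.eq_zero_iff (γ : G)).2 γ.2]
  have h_translate : QuotientAddGroup.mk (s := Γ) ⁻¹' (((v : G ⧸ Γ) + ·) ⁻¹' E) ∩ F =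
      (v + ·) ⁻¹' (QuotientAddGroup.mk (s := Γ) ⁻¹' E ∩ (v +ᵥ F)) := by
    ext x
    simp [Set.mem_vadd_set_iff_neg_vadd_mem]
  rw [Measure.map_apply (measurable_const_add _) hE, Measure.map_apply h_mk hE',
    Measure.map_apply h_mk hE, Measure.restrict_apply (h_mk hE'),
    Measure.restrict_apply (h_mk hE), h_translate, measure_preimage_add,
    hF.measure_set_eq (hF.vadd_of_comm v) (h_mk hE) h_periodic]

end Measure

section Convex

variable {E : Type*} [AddCommGroup E] [Module ℝ E]

lemma add_smul_add_smul_mem_convexHull (p u v : E) {a b : ℝ} (hb : 0 ≤ b) (hba : b ≤ a)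
    (ha : a ≤ 1) : p + a • u + b • v ∈ convexHull ℝ {p, p + u, p + u + v} := by
  have h_comb : (1 - a) • p + (a - b) • (p + u) + b • (p + u + v) = p + a • u + b • v := by
    module
  have h_sum := (convex_convexHull ℝ {p, p + u, p + u + v}).sum_mem (t := Finset.univ)
    (w := ![1 - a, a - b, b]) (z := ![p, p + u, p + u + v])
    (by simp [Fin.forall_fin_succ, hb, hba, ha]) (by simp [Fin.sum_univ_three])
    fun i _ => subset_convexHull ℝ _ (by fin_cases i <;> simp)
  rw [← h_comb]
  simpa [Fin.sum_univ_three] using h_sum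

/-- The parallelogram with corner `p` and sides `u`, `v`, given as the union of the two triangles
into which its diagonal `[p, p + u + v]` cuts it: this is how unions of the `A_α` present it. -/
def parallelogram (p u v : E) : Set E :=
  convexHull ℝ {p, p + u, p + u + v} ∪ convexHull ℝ {p, p + v, p + u + v}

lemma add_smul_add_smul_mem_parallelogram (p u v : E) {a b : ℝ} (ha : a ∈ Set.Icc (0 : ℝ) 1)
    (hb : b ∈ Set.Icc (0 : ℝ) 1) : p + a • u + b • v ∈ parallelogram p u v := by
  rcases le_total b a with hba | hab
  · exact .inl (add_smul_add_smul_mem_convexHull p u v hb.1 hba ha.2)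
  · refine .inr ?_
    rw [add_right_comm p u v, add_right_comm p (a • u)]
    exact add_smul_add_smul_mem_convexHull p v u ha.1 hab hb.2

lemma parallelogram_subset_preimage_Icc {f : E →ₗ[ℝ] ℝ} {u v : E} (hu : f u = 0) (hv : f v = 1)
    (p : E) : parallelogram p u v ⊆ f ⁻¹' Set.Icc (f p) (f p + 1) := by
  have h_convex := (convex_Icc (f p) (f p + 1)).linear_preimage f
  refine Set.union_subset (convexHull_min ?_ h_convex) (convexHull_min ?_ h_convex) <;>
    simp [Set.insert_subset_iff, hu, hv]

end Convex

section Circle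

lemma countable_preimage_coe_addCircle (T : ℝ) (θ : AddCircle T) :
    (((↑) : ℝ → AddCircle T) ⁻¹' {θ}).Countable := by
  obtain ⟨r, rfl⟩ := QuotientAddGroup.mk_surjective θ
  refine (Set.countable_range fun n : ℤ => r + n • T).mono fun x hx => ?_
  obtain ⟨n, hn⟩ := (AddCircle.coe_eq_zero_iff T (x := x - r)).1 (by simpa [sub_eq_zero] using hx)
  exact ⟨n, by simp [hn]⟩

/-- The closed half circle from `c` to `c + 1` in the circle of length `2`. -/
def halfCircle (c : ℝ) : Set (AddCircle (2 : ℝ)) := (↑) '' Set.Icc c (c + 1)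

lemma coe_mem_interior_halfCircle {c x : ℝ} (hx : x ∈ Set.Ioo c (c + 1)) :
    (x : AddCircle (2 : ℝ)) ∈ interior (halfCircle c) :=
  interior_maximal (Set.image_mono Set.Ioo_subset_Icc_self)
    (QuotientAddGroup.isOpenMap_coe _ isOpen_Ioo) (Set.mem_image_of_mem _ hx)

lemma coe_add_intCast_mul_two (x : ℝ) (n : ℤ) :
    ((x + n * 2 : ℝ) : AddCircle (2 : ℝ)) = x := by
  rw [AddCircle.coe_add, ← zsmul_eq_mul, add_eq_left, AddCircle.coe_eq_zero_iff]
  exact ⟨n, rfl⟩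

lemma coe_intCast_eq_zero_or_one (n : ℤ) :
    ((n : ℝ) : AddCircle (2 : ℝ)) = (0 : ℝ) ∨ ((n : ℝ) : AddCircle (2 : ℝ)) = (1 : ℝ) := by
  rw [← Int.emod_add_ediv_mul n 2]
  push_cast
  rw [coe_add_intCast_mul_two]
  rcases Int.emod_two_eq_zero_or_one n with h | h <;> simp [h]

lemma mem_interior_halfCircle_or_neg_mem (n : ℤ) {θ : AddCircle (2 : ℝ)}
    (h₀ : θ ≠ (0 : ℝ)) (h₁ : θ ≠ (1 : ℝ)) :
    θ ∈ interior (halfCircle n) ∨ -θ ∈ interior (halfCircle n) := by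
  have h_int (m : ℤ) : θ ≠ (m : ℝ) := fun h =>
    (coe_intCast_eq_zero_or_one m).elim (fun h' => h₀ (h.trans h')) fun h' => h₁ (h.trans h')
  obtain ⟨x, ⟨hnx, hxn⟩, rfl⟩ : θ ∈ ((↑) : ℝ → AddCircle (2 : ℝ)) '' Set.Ico (n : ℝ) (n + 2) := by
    have : Fact ((0 : ℝ) < 2) := ⟨two_pos⟩
    rw [AddCircle.coe_image_Ico_eq]
    trivial
  have hx_int (m : ℤ) : x ≠ m := fun h => h_int m (h ▸ rfl)
  rcases lt_or_ge x (n + 1) with hx | hx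
  · exact .inl (coe_mem_interior_halfCircle ⟨hnx.lt_of_ne' (hx_int n), hx⟩)
  · right
    rw [← AddCircle.coe_neg, ← coe_add_intCast_mul_two _ (n + 1)]
    have : (n : ℝ) + 1 < x := hx.lt_of_ne' (mod_cast hx_int (n + 1))
    exact coe_mem_interior_halfCircle ⟨by push_cast; linarith, by push_cast; linarith⟩

end Circle

section Lattice

instance : BorelSpace Torus := ⟨rfl⟩

lemma continuous_tmk : Continuous tmk := continuous_quot_mk

lemma tmk_surjective : Function.Surjective tmk := QuotientAddGroup.mk_surjective

lemma tmk_neg (x : ℝ × ℝ) : tmk (-x) = -tmk x := rfl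

lemma tmk_eq_tmk_iff {x y : ℝ × ℝ} : tmk x = tmk y ↔ -x + y ∈ TetLat := QuotientAddGroup.eq

lemma tmk_add_of_mem (x : ℝ × ℝ) {l : ℝ × ℝ} (hl : l ∈ TetLat) : tmk (x + l) = tmk x :=
  QuotientAddGroup.mk_add_of_mem x hl

/-- The generators of `TetLat`, as a basis of the plane. -/
def latticeBasis : Module.Basis (Fin 2) ℝ (ℝ × ℝ) :=
  basisOfLinearIndependentOfCardEqFinrank (b := ![((2 : ℝ), (0 : ℝ)), ((1 : ℝ), -Real.sqrt 3)])
    (LinearIndependent.pair_iff.2 fun a b h => by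
      have hb : b = 0 := by simpa using congr_arg Prod.snd h
      exact ⟨by simpa [hb] using h, hb⟩)
    (by simp)

lemma latticeBasis_zero : latticeBasis 0 = (2, 0) := by simp [latticeBasis]

lemma latticeBasis_one : latticeBasis 1 = (1, -Real.sqrt 3) := by simp [latticeBasis]

lemma tetLat_eq_span :
    TetLat = (Submodule.span ℤ (Set.range latticeBasis)).toAddSubgroup := by
  rw [Submodule.span_int_eq_addSubgroupClosure, TetLat, ← latticeBasis_zero, ← latticeBasis_one]
  congr
  ext x
  simp [Fin.exists_fin_two, eq_comm]

lemma fundDom_eq_fundamentalDomain : FundDom = ZSpan.fundamentalDomain latticeBasis := by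
  rw [FundDom, ← latticeBasis_zero, ← latticeBasis_one]
  ext x
  rw [ZSpan.mem_fundamentalDomain, Fin.forall_fin_two]
  constructor
  · rintro ⟨⟨a, b⟩, hab, rfl⟩
    simpa using hab
  · exact fun h => ⟨(latticeBasis.repr x 0, latticeBasis.repr x 1), h,
      (Fin.sum_univ_two _).symm.trans (latticeBasis.sum_repr x)⟩

instance : Countable TetLat := by
  rw [tetLat_eq_span]
  exact inferInstanceAs (Countable (Submodule.span ℤ (Set.range latticeBasis)))

lemma isAddFundamentalDomain_fundDom :
    IsAddFundamentalDomain TetLat FundDom (volume : Measure (ℝ × ℝ)) := by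
  rw [tetLat_eq_span, fundDom_eq_fundamentalDomain]
  exact ZSpan.isAddFundamentalDomain' latticeBasis volume

instance : haarT.IsAddLeftInvariant :=
  isAddLeftInvariant_map_quotientMk isAddFundamentalDomain_fundDom
    continuous_tmk.measurable

end Lattice

section Level

lemma om_two : om 2 = -om 0 - om 1 := by
  ext <;> norm_num [om]
  ring

lemma om_add_two (i : Fin 3) : om (i + 2) = -om i - om (i + 1) := by
  fin_cases i <;> simp [om_two]
  abel

lemma tetLat_eq_closure_om :
    TetLat = AddSubgroup.closure {(2 : ℝ) • om 0, -((2 : ℝ) • om 1)} := by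
  simp [TetLat, om, mul_div_cancel₀]

lemma two_smul_om_mem (i : Fin 3) : (2 : ℝ) • om i ∈ TetLat := by
  have h₀ : (2 : ℝ) • om 0 ∈ TetLat := tetLat_eq_closure_om ▸ AddSubgroup.subset_closure (.inl rfl)
  have h₁ : -((2 : ℝ) • om 1) ∈ TetLat :=
    tetLat_eq_closure_om ▸ AddSubgroup.subset_closure (.inr rfl)
  fin_cases i
  · exact h₀
  · simpa using h₁
  · simpa [om_two, smul_sub, sub_eq_add_neg] using add_mem (neg_mem h₀) h₁

/-- The linear coordinate of the plane which is constant along `om i` and takes the value `1` at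
`om (i + 1)`, namely `x ↦ (2 / √3) det (om i, x)`. -/
def height (i : Fin 3) : ℝ × ℝ →ₗ[ℝ] ℝ :=
  (2 / Real.sqrt 3) • ((om i).1 • LinearMap.snd ℝ ℝ ℝ - (om i).2 • LinearMap.fst ℝ ℝ ℝ)

lemma height_om_self (i : Fin 3) : height i (om i) = 0 := by
  simp [height, mul_comm]

lemma height_om_add_one (i : Fin 3) : height i (om (i + 1)) = 1 := by
  fin_cases i <;> simp [height, om]
  all_goals
    field_simp
    norm_num

lemma height_om_add_two (i : Fin 3) : height i (om (i + 2)) = -1 := by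
  simp [om_add_two, height_om_self, height_om_add_one]

lemma height_surjective (i : Fin 3) : Function.Surjective (height i) := fun r =>
  ⟨r • om (i + 1), by simp [height_om_add_one]⟩

lemma exists_height_om_eq_intCast (i j : Fin 3) : ∃ k : ℤ, |k| ≤ 1 ∧ height i (om j) = k := by
  obtain rfl | rfl | rfl : j = i ∨ j = i + 1 ∨ j = i + 2 := by
    revert i j
    decide
  · exact ⟨0, by simp [height_om_self]⟩
  · exact ⟨1, by simp [height_om_add_one]⟩
  · exact ⟨-1, by simp [height_om_add_two]⟩

lemma eq_height_smul_sub_height_smul (i : Fin 3) (x : ℝ × ℝ) :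
    x = height i x • om (i + 1) - height (i + 1) x • om i := by
  fin_cases i <;> ext <;> simp [height, om] <;> field_simp <;> norm_num <;> ring

lemma tetLat_le_comap_height (i : Fin 3) :
    TetLat ≤ (AddSubgroup.zmultiples (2 : ℝ)).comap (height i).toAddMonoidHom := by
  obtain ⟨k, -, hk⟩ := exists_height_om_eq_intCast i 0
  obtain ⟨l, -, hl⟩ := exists_height_om_eq_intCast i 1
  rw [tetLat_eq_closure_om, AddSubgroup.closure_le, Set.pair_subset_iff]
  refine ⟨⟨k, ?_⟩, ⟨-l, ?_⟩⟩
  · simp [hk, mul_comm]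
  · simp [hl, mul_comm]

/-- The coordinate `height i` modulo the lattice: it takes values in the circle of length `2`. -/
def level (i : Fin 3) : Torus →+ AddCircle (2 : ℝ) :=
  QuotientAddGroup.map TetLat (AddSubgroup.zmultiples 2) (height i).toAddMonoidHom
    (tetLat_le_comap_height i)

lemma level_tmk (i : Fin 3) (x : ℝ × ℝ) : level i (tmk x) = height i x := rfl

lemma continuous_level (i : Fin 3) : Continuous (level i) :=
  ((AddCircle.continuous_mk' 2).comp
    (height i).continuous_of_finiteDimensional).quotient_lift _

lemma isOpenMap_level (i : Fin 3) : IsOpenMap (level i) := by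
  have h_open : IsOpenMap (level i ∘ tmk) := QuotientAddGroup.isOpenMap_coe.comp
    ((height i).isOpenMap_of_finiteDimensional (height_surjective i))
  exact .of_comp continuous_tmk tmk_surjective h_open

lemma exists_tmk_add_smul_om_eq {i : Fin 3} {p : Torus} {x₀ : ℝ × ℝ}
    (h : level i p = height i x₀) : ∃ t ∈ Set.Ico (0 : ℝ) 2, tmk (x₀ + t • om i) = p := by
  obtain ⟨x, rfl⟩ := tmk_surjective p
  obtain ⟨m, hm⟩ : ∃ m : ℤ, m • 2 = height i (x - x₀) :=
    (AddCircle.coe_eq_zero_iff 2).1 (by rw [map_sub, AddCircle.coe_sub, ← level_tmk, h, sub_self])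
  set a := -height (i + 1) (x - x₀)
  refine ⟨toIcoMod two_pos 0 a, toIcoMod_mem_Ico' two_pos a, tmk_eq_tmk_iff.2 ?_⟩
  have h_diff : -(x₀ + toIcoMod two_pos 0 a • om i) + x =
      m • (2 : ℝ) • om (i + 1) + toIcoDiv two_pos 0 a • (2 : ℝ) • om i := by
    calc -(x₀ + toIcoMod two_pos 0 a • om i) + x
        = (x - x₀) - toIcoMod two_pos 0 a • om i := by abel
      _ = (m • (2 : ℝ)) • om (i + 1) + (a - toIcoMod two_pos 0 a) • om i := by
        rw [eq_height_smul_sub_height_smul i (x - x₀), hm]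
        module
      _ = _ := by rw [self_sub_toIcoMod, smul_assoc, smul_assoc]
  rw [h_diff]
  exact add_mem (zsmul_mem (two_smul_om_mem _) m) (zsmul_mem (two_smul_om_mem i) _)

lemma preimage_level_singleton (i : Fin 3) (x₀ : ℝ × ℝ) :
    level i ⁻¹' {(height i x₀ : AddCircle (2 : ℝ))} =
      tmk '' segment ℝ x₀ (x₀ + (2 : ℝ) • om i) := by
  rw [segment_eq_image']
  ext p
  constructor
  · intro hp
    obtain ⟨t, ⟨ht₀, ht₂⟩, rfl⟩ := exists_tmk_add_smul_om_eq hp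
    refine ⟨_, ⟨t / 2, ⟨by linarith, by linarith⟩, rfl⟩, ?_⟩
    simp [smul_smul]
  · rintro ⟨_, ⟨t, -, rfl⟩, rfl⟩
    simp [level_tmk, height_om_self]

end Level

section Region

open scoped Pointwise

/-- The left end of the lower side of the strip `posClosure i`, whose sides are parallel to
`om i`. -/
def corner : Fin 3 → ℝ × ℝ
  | 0 => -om 0
  | 1 => 0
  | 2 => om 1

lemma two_smul_corner_mem (i : Fin 3) : (2 : ℝ) • corner i ∈ TetLat := by
  fin_cases i
  · simpa [corner] using two_smul_om_mem 0
  · simp [corner]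
  · exact two_smul_om_mem 1

lemma exists_height_corner_eq_intCast (i : Fin 3) : ∃ n : ℤ, height i (corner i) = n := by
  fin_cases i
  · exact ⟨0, by simp [corner, height_om_self]⟩
  · exact ⟨0, by simp [corner]⟩
  · exact ⟨-1, by simpa [corner] using height_om_add_two 2⟩

lemma triVerts_zero (i : Fin 3) :
    triVerts 0 = {corner i, corner i + om i, corner i + om i + om (i + 1)} := by
  ext x
  match i with
  | 0 | 1 | 2 =>
    simp only [Fin.reduceAdd]
    norm_num [triVerts, corner, om, opp, neg_div, ← Prod.zero_eq_mk]
    tauto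

lemma triVerts_opp (i : Fin 3) :
    triVerts (opp i) = {corner i, corner i + om i, corner i - om (i + 1)} := by
  ext x
  match i with
  | 0 | 1 | 2 =>
    simp only [Fin.reduceAdd]
    norm_num [triVerts, corner, om, opp, neg_div, ← Prod.zero_eq_mk] <;> tauto

lemma triVerts_opp_add_one (i : Fin 3) :
    triVerts (opp (i + 1)) =
      {corner i + om i, corner i + om i + om (i + 1), corner i + om i + om i + om (i + 1)} := by
  ext x
  have h_half : Real.sqrt 3 + -(Real.sqrt 3 / 2) = Real.sqrt 3 / 2 := by ring
  match i with
  | 0 | 1 | 2 =>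
    simp only [Fin.reduceAdd]
    norm_num [triVerts, corner, om, opp, neg_div, h_half, ← Prod.zero_eq_mk] <;> tauto

lemma triVerts_opp_add_two (i : Fin 3) :
    triVerts (opp (i + 2)) = {corner i, corner i + om (i + 1), corner i + om i + om (i + 1)} := by
  ext x
  match i with
  | 0 | 1 | 2 =>
    simp only [Fin.reduceAdd]
    norm_num [triVerts, corner, om, opp, neg_div, ← Prod.zero_eq_mk]
    tauto

lemma iot_tmk_eq_tmk_pointReflection {c : ℝ × ℝ} (hc : (2 : ℝ) • c ∈ TetLat) (x : ℝ × ℝ) :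
    iot (tmk x) = tmk (AffineEquiv.pointReflection ℝ c x) := by
  rw [AffineEquiv.pointReflection_apply, vsub_eq_sub, vadd_eq_add,
    show c - x + c = -x + (2 : ℝ) • c by module, tmk_add_of_mem _ hc, tmk_neg, iot]

-- The half turn carries `A_{opp i}` to the one triangle of the strip that is not an `A_α`.
lemma image_iot_triA_opp (i : Fin 3) :
    iot '' TriA (opp i) = tmk '' convexHull ℝ {corner i + om i, corner i + om i + om i,
      corner i + om i + om i + om (i + 1)} := by
  have h_center : (2 : ℝ) • (corner i + om i) ∈ TetLat := by
    rw [smul_add]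
    exact add_mem (two_smul_corner_mem i) (two_smul_om_mem i)
  have h_verts : AffineEquiv.pointReflection ℝ (corner i + om i) '' triVerts (opp i) =
      {corner i + om i, corner i + om i + om i, corner i + om i + om i + om (i + 1)} := by
    rw [triVerts_opp, Set.image_insert_eq, Set.image_pair, Set.insert_comm,
      AffineEquiv.pointReflection_self]
    simp only [AffineEquiv.pointReflection_apply, vsub_eq_sub, vadd_eq_add]
    rw [show corner i + om i - corner i + (corner i + om i) = corner i + om i + om i by abel,
      show corner i + om i - (corner i - om (i + 1)) + (corner i + om i) =
        corner i + om i + om i + om (i + 1) by abel]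
  rw [← h_verts, ← AffineEquiv.coe_toAffineMap, ← AffineMap.image_convexHull, TriA]
  simp_rw [Set.image_image, iot_tmk_eq_tmk_pointReflection h_center]
  rfl

/-- The closed set whose interior is `PosReg i`. -/
def posClosure (i : Fin 3) : Set Torus :=
  (⋃ α ∈ {a : Fin 4 | a ≠ opp i}, TriA α) ∪ iot '' TriA (opp i)

lemma posReg_eq_interior (i : Fin 3) : PosReg i = interior (posClosure i) := rfl

lemma negReg_eq_neg_posReg (i : Fin 3) : NegReg i = -PosReg i := by
  have h_iot (S : Set Torus) : iot '' S = -S := Set.image_neg_eq_neg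
  have h_interior : -PosReg i = interior (-posClosure i) :=
    (Homeomorph.neg Torus).preimage_interior _
  simp [NegReg, h_interior, posClosure, h_iot, Set.union_comm]

lemma posClosure_eq_image_parallelogram (i : Fin 3) :
    posClosure i = tmk '' (parallelogram (corner i) (om i) (om (i + 1)) ∪
      parallelogram (corner i + om i) (om i) (om (i + 1))) := by
  have h_others : {a : Fin 4 | a ≠ opp i} = {0, opp (i + 2), opp (i + 1)} := by
    ext a
    simp only [Set.mem_ofPred_eq, Set.mem_insert_iff, Set.mem_singleton_iff]
    revert i a
    decide
  rw [posClosure, h_others, Set.biUnion_insert, Set.biUnion_pair, image_iot_triA_opp]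
  simp only [TriA, triVerts_zero i, triVerts_opp_add_one, triVerts_opp_add_two, parallelogram,
    Set.image_union, Set.union_assoc]
  congr! 2
  exact Set.union_comm _ _

lemma image_parallelogram_subset (i : Fin 3) {p : ℝ × ℝ} :
    tmk '' parallelogram p (om i) (om (i + 1)) ⊆ level i ⁻¹' halfCircle (height i p) := by
  rw [Set.image_subset_iff]
  exact (parallelogram_subset_preimage_Icc (height_om_self i) (height_om_add_one i) p).trans
    fun x hx => ⟨_, hx, level_tmk i x⟩

lemma posClosure_eq_preimage_halfCircle (i : Fin 3) :
    posClosure i = level i ⁻¹' halfCircle (height i (corner i)) := by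
  rw [posClosure_eq_image_parallelogram, Set.image_union]
  refine (Set.union_subset (image_parallelogram_subset i) ?_).antisymm ?_
  · simpa [height_om_self] using image_parallelogram_subset i (p := corner i + om i)
  rintro p ⟨y, ⟨hy₀, hy₁⟩, hyp⟩
  set b := y - height i (corner i) with hb
  obtain ⟨t, ⟨ht₀, ht₂⟩, rfl⟩ := exists_tmk_add_smul_om_eq (x₀ := corner i + b • om (i + 1))
    (hyp.symm.trans (by simp [height_om_add_one, hb]))
  have hb_mem : b ∈ Set.Icc (0 : ℝ) 1 := ⟨by linarith, by linarith⟩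
  rw [add_right_comm]
  rcases le_total t 1 with ht | ht
  · exact .inl (Set.mem_image_of_mem _
      (add_smul_add_smul_mem_parallelogram _ _ _ ⟨ht₀, ht⟩ hb_mem))
  · refine .inr (Set.mem_image_of_mem _ ?_)
    convert! add_smul_add_smul_mem_parallelogram (corner i + om i) (om i) (om (i + 1))
      (a := t - 1) ⟨by linarith, by linarith⟩ hb_mem using 2
    module

lemma posReg_eq_preimage_level (i : Fin 3) :
    PosReg i = level i ⁻¹' interior (halfCircle (height i (corner i))) := by
  rw [(isOpenMap_level i).preimage_interior_eq_interior_preimage (continuous_level i),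
    ← posClosure_eq_preimage_halfCircle, posReg_eq_interior]

lemma fIDef_of_level_ne {i : Fin 3} {p : Torus} (h₀ : level i p ≠ (0 : ℝ))
    (h₁ : level i p ≠ (1 : ℝ)) : fIDef i p := by
  obtain ⟨n, hn⟩ := exists_height_corner_eq_intCast i
  rw [fIDef, negReg_eq_neg_posReg, posReg_eq_preimage_level, hn]
  simpa using mem_interior_halfCircle_or_neg_mem n h₀ h₁

end Region

section Exchange

lemma haarT_preimage_level_singleton (i : Fin 3) (θ : AddCircle (2 : ℝ)) :
    haarT (level i ⁻¹' {θ}) = 0 := by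
  have h_countable := countable_preimage_coe_addCircle 2 θ
  have h_plane : volume (height i ⁻¹' ((↑) ⁻¹' {θ} : Set ℝ)) = 0 :=
    compl_mem_ae_iff.1 <| (ae_comp_linearMap_mem_iff (height i) volume volume
      (height_surjective i) h_countable.measurableSet.compl).2 (h_countable.ae_notMem volume)
  have h_meas : MeasurableSet (level i ⁻¹' {θ}) :=
    (isClosed_singleton.preimage (continuous_level i)).measurableSet
  rw [haarT, Measure.map_apply continuous_tmk.measurable h_meas]
  exact Measure.absolutelyContinuous_of_le Measure.restrict_le_self h_plane

lemma level_add_tmk_smul_om_self (i : Fin 3) (t : ℝ) (p : Torus) :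
    level i (p + tmk (t • om i)) = level i p := by
  simp [level_tmk, height_om_self]

lemma add_tmk_smul_om_mem_posReg (i : Fin 3) (t : ℝ) (p : Torus) :
    p + tmk (t • om i) ∈ PosReg i ↔ p ∈ PosReg i := by
  simp [posReg_eq_preimage_level, level_add_tmk_smul_om_self]

lemma sub_tmk_smul_om_mem_posReg (i : Fin 3) (t : ℝ) (p : Torus) :
    p - tmk (t • om i) ∈ PosReg i ↔ p ∈ PosReg i := by
  rw [← add_tmk_smul_om_mem_posReg i t, sub_add_cancel]

lemma measurePreserving_fI (s : ℝ) (i : Fin 3) : MeasurePreserving (fI s i) haarT haarT :=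
  measurePreserving_piecewise (measurePreserving_add_right haarT _)
    (measurePreserving_sub_right haarT _) isOpen_interior.measurableSet
    (Set.ext (add_tmk_smul_om_mem_posReg i s)) (Set.ext (sub_tmk_smul_om_mem_posReg i s))

lemma fI_neg_fI (s : ℝ) (i : Fin 3) (p : Torus) : fI (-s) i (fI s i p) = p := by
  by_cases hp : p ∈ PosReg i
  · simp [fI, hp, add_tmk_smul_om_mem_posReg, tmk_neg]
  · simp [fI, hp, sub_tmk_smul_om_mem_posReg, tmk_neg]

/-- The map `fI s i` as an automorphism of the measurable space `Torus`. -/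
def fIEquiv (s : ℝ) (i : Fin 3) : Torus ≃ᵐ Torus where
  toFun := fI s i
  invFun := fI (-s) i
  left_inv := fI_neg_fI s i
  right_inv p := by simpa using fI_neg_fI (-s) i p
  measurable_toFun := (measurePreserving_fI s i).measurable
  measurable_invFun := (measurePreserving_fI (-s) i).measurable

/-- The map `fS s` as an automorphism of the measurable space `Torus`. -/
def fSEquiv (s : ℝ) : Torus ≃ᵐ Torus :=
  (fIEquiv s 0).trans ((fIEquiv s 1).trans (fIEquiv s 2))

lemma measurePreserving_fSEquiv (s : ℝ) : MeasurePreserving (fSEquiv s) haarT haarT :=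
  (measurePreserving_fI s 2).comp ((measurePreserving_fI s 1).comp (measurePreserving_fI s 0))

end Exchange

section Singular

lemma exists_level_fI_eq (s : ℝ) (i j : Fin 3) (p : Torus) :
    ∃ k : ℤ, |k| ≤ 1 ∧ level i (fI s j p) = level i p + (k * s : ℝ) := by
  obtain ⟨k, hk, h_height⟩ := exists_height_om_eq_intCast i j
  rw [fI]
  split_ifs
  · exact ⟨k, hk, by simp [level_tmk, h_height, mul_comm]⟩
  · exact ⟨-k, by simpa using hk, by simp [level_tmk, h_height, mul_comm, sub_eq_add_neg]⟩

/-- A finite union of closed lines off which `fS s` is defined. The bound `2` on the number of steps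
of length `s` is the number of maps `fI s j` applied before the last one. -/
def singularSet (s : ℝ) : Set Torus :=
  ⋃ q : Fin 3 × Fin 2 × Finset.Icc (-2 : ℤ) 2,
    level q.1 ⁻¹' {((q.2.1 - q.2.2 * s : ℝ) : AddCircle (2 : ℝ))}

lemma haarT_singularSet (s : ℝ) : haarT (singularSet s) = 0 :=
  measure_iUnion_null fun _ => haarT_preimage_level_singleton _ _

lemma fIDef_of_level_eq_add {s : ℝ} {i : Fin 3} {p q : Torus} (hp : p ∉ singularSet s) {k : ℤ}
    (hk : |k| ≤ 2) (h_level : level i q = level i p + (k * s : ℝ)) : fIDef i q := by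
  have h_ne (j : Fin 2) : level i q ≠ (j : ℝ) := fun hj => by
    refine hp (Set.mem_iUnion.2 ⟨(i, j, ⟨k, Finset.mem_Icc.2 (abs_le.1 hk)⟩), ?_⟩)
    rw [Set.mem_preimage, Set.mem_singleton_iff, AddCircle.coe_sub, eq_sub_iff_add_eq, ← h_level,
      hj]
  exact fIDef_of_level_ne (by simpa using h_ne 0) (by simpa using h_ne 1)

lemma fSDef_of_notMem_singularSet {s : ℝ} {p : Torus} (hp : p ∉ singularSet s) :
    fSDef s p := by
  obtain ⟨k, hk, h₁⟩ := exists_level_fI_eq s 1 0 p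
  obtain ⟨l, hl, h₂⟩ := exists_level_fI_eq s 2 0 p
  obtain ⟨m, hm, h₃⟩ := exists_level_fI_eq s 2 1 (fI s 0 p)
  refine ⟨fIDef_of_level_eq_add hp (k := 0) (by simp) (by simp),
    fIDef_of_level_eq_add hp (hk.trans one_le_two) h₁,
    fIDef_of_level_eq_add hp (k := l + m) ((abs_add_le l m).trans (add_le_add hl hm)) ?_⟩
  rw [h₃, h₂, add_assoc, ← AddCircle.coe_add]
  push_cast
  rw [add_mul]

lemma exists_singularSet_eq_iUnion_segment (s : ℝ) :
    ∃ (n : ℕ) (a b : Fin n → ℝ × ℝ), singularSet s = ⋃ j, tmk '' segment ℝ (a j) (b j) := by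
  obtain ⟨n, ⟨e⟩⟩ := Finite.exists_equiv_fin (Fin 3 × Fin 2 × Finset.Icc (-2 : ℤ) 2)
  let a (q : Fin 3 × Fin 2 × Finset.Icc (-2 : ℤ) 2) : ℝ × ℝ :=
    (q.2.1 - q.2.2 * s : ℝ) • om (q.1 + 1)
  refine ⟨n, fun j => a (e.symm j), fun j => a (e.symm j) + (2 : ℝ) • om (e.symm j).1, ?_⟩
  refine (e.symm.surjective.iUnion_comp _).symm.trans (Set.iUnion_congr fun j => ?_)
  rw [← preimage_level_singleton]
  simp [a, height_om_add_one]

end Singular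

theorem stmt_12_general (s : ℝ) :
    ∃ (N : Set Torus) (n : ℕ) (a b : Fin n → ℝ × ℝ),
      N = ⋃ i : Fin n, tmk '' segment ℝ (a i) (b i) ∧
      (∀ p ∈ Nᶜ, fSDef s p) ∧
      Set.InjOn (fS s) Nᶜ ∧
      haarT ((fS s '' Nᶜ)ᶜ) = 0 ∧
      ∃ N' : Set Torus, haarT N' = 0 ∧
        Measure.map (fS s) (haarT.restrict Nᶜ) = haarT.restrict N'ᶜ := by
  obtain ⟨n, a, b, h_segments⟩ := exists_singularSet_eq_iUnion_segment s
  have h_pres := measurePreserving_fSEquiv s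
  have h_null := haarT_singularSet s
  refine ⟨singularSet s, n, a, b, h_segments, fun p => fSDef_of_notMem_singularSet,
    (fSEquiv s).injective.injOn, measure_compl_image_compl_eq_zero h_pres h_null,
    ∅, measure_empty, ?_⟩
  rw [Set.compl_empty, Measure.restrict_univ]
  exact map_restrict_compl_of_null h_pres h_null

/-- For every s ∈ (0,1), the tetrahedral PET f̃ₛ is a polytope
exchange transformation of the torus: there is a finite union N of line segments
in Δ̃ such that f̃ₛ is defined and injective on Δ̃ ∖ N, its image has full Haar
measure, and it preserves Haar measure (the pushforward of Haar measure restricted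
to Δ̃ ∖ N agrees with Haar measure up to a null set). -/
theorem stmt_12 (s : ℝ) (hs : s ∈ Set.Ioo (0 : ℝ) 1) :
    ∃ (N : Set Torus) (n : ℕ) (a b : Fin n → ℝ × ℝ),
      N = ⋃ i : Fin n, tmk '' segment ℝ (a i) (b i) ∧
      (∀ p ∈ Nᶜ, fSDef s p) ∧
      Set.InjOn (fS s) Nᶜ ∧
      haarT ((fS s '' Nᶜ)ᶜ) = 0 ∧
      ∃ N' : Set Torus, haarT N' = 0 ∧
        Measure.map (fS s) (haarT.restrict Nᶜ) = haarT.restrict N'ᶜ :=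
  stmt_12_general s

end
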